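/- Let M be a left R-module such that the product ·_M on submodules is associative. Then the following are equivalent: (a) M is a Gelfand module; (b) for every pair of distinct maximal submodules N, L of M there exist submodules N', L' of M (not necessarily fully invariant) with N' ⊄ N, L' ⊄ L and L'·_M N' = 0; (c) for every pair of distinct maximal submodules N, L of M there exist elements a ∉ L and b ∉ N such that f(a) = 0 for every homomorphism f : M → Rb (that is, a ∈ Ann_M(Rb)). -/

import Mathlib

/-! For any submodule `A`, the product `A ·_M M` is the smallest fully invariant submodule
containing `A`, so witnesses `N'`, `L'` with `L' ·_M N' = 0` should be enlarged to `N' ·_M M` and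
`L' ·_M M`. Associativity says that this does not destroy the vanishing of the product
(`smProd_closure_eq_bot`):
`(L' ·_M M) ·_M (N' ·_M M) = (L' ·_M (M ·_M N')) ·_M M ⊆ (L' ·_M N') ·_M M = 0`.
The element-wise condition is the case of cyclic witnesses `N' = Rb`, `L' = Ra`; arbitrary
witnesses can be shrunk to cyclic ones because the product is monotone in both variables. -/

open Submodule

variable {R : Type*} [Ring R] {M : Type*} [AddCommGroup M] [Module R M]

/-- The product `N ·_M L = Σ { f(N) : f ∈ Hom_R(M, L) }` of submodules of `M`. -/
def SmProd (N L : Submodule R M) : Submodule R M :=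
  ⨆ f : M →ₗ[R] L, N.map (L.subtype ∘ₗ f)

/-- A submodule is fully invariant if it is stable under every endomorphism of `M`. -/
def IsFI (N : Submodule R M) : Prop :=
  ∀ f : M →ₗ[R] M, N.map f ≤ N

/-- `N` is a maximal proper fully invariant submodule of `M`
(a coatom of the lattice of fully invariant submodules). -/
def IsMaxFI (N : Submodule R M) : Prop :=
  IsFI N ∧ N ≠ ⊤ ∧ ∀ L : Submodule R M, IsFI L → N < L → L = ⊤

/-- `M` is strongly harmonic if for every pair of distinct maximal proper fully invariant
submodules `N, L` there are fully invariant `N', L'` with `N' ⊄ N`, `L' ⊄ L`, `L' ·_M N' = 0`. -/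
def StronglyHarmonic (R M : Type*) [Ring R] [AddCommGroup M] [Module R M] : Prop :=
  ∀ N L : Submodule R M, IsMaxFI N → IsMaxFI L → N ≠ L →
    ∃ N' L' : Submodule R M, IsFI N' ∧ IsFI L' ∧ ¬ N' ≤ N ∧ ¬ L' ≤ L ∧ SmProd L' N' = ⊥

/-- `Ann_M(K) = Σ { L ≤ M : L ·_M K = 0 }`. -/
def AnnM (K : Submodule R M) : Submodule R M :=
  sSup {L : Submodule R M | SmProd L K = ⊥}

/-- `Ler(N) = Σ { K fully invariant : N + Ann_M(K) = M }`. -/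
def Ler (N : Submodule R M) : Submodule R M :=
  sSup {K : Submodule R M | IsFI K ∧ N ⊔ AnnM K = ⊤}

/-- `M` is quasi-projective. -/
def QuasiProjective (R M : Type*) [Ring R] [AddCommGroup M] [Module R M] : Prop :=
  ∀ (K : Submodule R M) (h : M →ₗ[R] M ⧸ K), ∃ g : M →ₗ[R] M, K.mkQ ∘ₗ g = h

/-- The lattice `Λ^{fi}(M)` of fully invariant submodules is compact. -/
def FICompact (R M : Type*) [Ring R] [AddCommGroup M] [Module R M] : Prop :=
  ∀ S : Set (Submodule R M), (∀ N ∈ S, IsFI N) → sSup S = ⊤ →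
    ∃ F : Finset (Submodule R M), ↑F ⊆ S ∧ sSup (F : Set (Submodule R M)) = ⊤

/-- The lattice `Λ^{fi}(M)` is normal. -/
def FINormal (R M : Type*) [Ring R] [AddCommGroup M] [Module R M] : Prop :=
  ∀ N L : Submodule R M, IsFI N → IsFI L → N ⊔ L = ⊤ →
    ∃ N' L' : Submodule R M, IsFI N' ∧ IsFI L' ∧
      N ⊔ L' = ⊤ ∧ N' ⊔ L = ⊤ ∧ SmProd N' L' = ⊥

/-- Gelfand module. -/
def Gelfand (R M : Type*) [Ring R] [AddCommGroup M] [Module R M] : Prop :=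
  ∀ N L : Submodule R M, IsCoatom N → IsCoatom L → N ≠ L →
    ∃ N' L' : Submodule R M, IsFI N' ∧ IsFI L' ∧ ¬ N' ≤ N ∧ ¬ L' ≤ L ∧ SmProd L' N' = ⊥

/-- The hull-kernel topology on `mx^{fi}(M)`, generated by the sets
`m(K) = {𝓜 : K ⊄ 𝓜}` for `K` fully invariant. -/
def mxfiTop (R M : Type*) [Ring R] [AddCommGroup M] [Module R M] :
    TopologicalSpace {N : Submodule R M // IsMaxFI N} :=
  TopologicalSpace.generateFrom
    {U | ∃ K : Submodule R M, IsFI K ∧ U = {𝓜 : {N : Submodule R M // IsMaxFI N} | ¬ K ≤ 𝓜.1}}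

/-- The frame `Ψ(M)`. -/
def PsiSet (R M : Type*) [Ring R] [AddCommGroup M] [Module R M] : Set (Submodule R M) :=
  {N | IsFI N ∧ ∀ n ∈ N, N ⊔ AnnM (Submodule.span R {n}) = ⊤}

/-- The points (`∧`-irreducible elements) of `Ψ(M)`. -/
def PsiPt (R M : Type*) [Ring R] [AddCommGroup M] [Module R M] : Set (Submodule R M) :=
  {p | p ∈ PsiSet R M ∧ p ≠ ⊤ ∧
    ∀ N ∈ PsiSet R M, ∀ L ∈ PsiSet R M, N ⊓ L ≤ p → N ≤ p ∨ L ≤ p}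

/-- The topology on the point space of `Ψ(M)`, with opens generated by
`U(N) = {p : N ⊄ p}` for `N ∈ Ψ(M)`. -/
def psiPtTop (R M : Type*) [Ring R] [AddCommGroup M] [Module R M] :
    TopologicalSpace (PsiPt R M) :=
  TopologicalSpace.generateFrom
    {U | ∃ N ∈ PsiSet R M, U = {p : PsiPt R M | ¬ N ≤ p.1}}

theorem smProd_le_iff {A B C : Submodule R M} :
    SmProd A B ≤ C ↔ ∀ f : M →ₗ[R] B, ∀ x ∈ A, (f x : M) ∈ C := by
  simp only [SmProd, iSup_le_iff, Submodule.map_le_iff_le_comap]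
  rfl

theorem smProd_eq_bot_iff {A B : Submodule R M} :
    SmProd A B = ⊥ ↔ ∀ f : M →ₗ[R] B, ∀ x ∈ A, f x = 0 := by
  rw [← le_bot_iff, smProd_le_iff]
  simp

theorem apply_mem_smProd {A B : Submodule R M} (f : M →ₗ[R] B) {x : M} (hx : x ∈ A) :
    (f x : M) ∈ SmProd A B :=
  smProd_le_iff.1 le_rfl f x hx

theorem smProd_le_right (A B : Submodule R M) : SmProd A B ≤ B :=
  smProd_le_iff.2 fun f x _ => (f x).2

theorem smProd_mono {A A' B B' : Submodule R M} (hA : A ≤ A') (hB : B ≤ B') :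
    SmProd A B ≤ SmProd A' B' :=
  smProd_le_iff.2 fun f _ hx => apply_mem_smProd (Submodule.inclusion hB ∘ₗ f) (hA hx)

theorem apply_mem_smProd_top {A : Submodule R M} (f : M →ₗ[R] M) {x : M} (hx : x ∈ A) :
    f x ∈ SmProd A ⊤ :=
  apply_mem_smProd (f.codRestrict ⊤ fun _ => trivial) hx

theorem le_smProd_top (A : Submodule R M) : A ≤ SmProd A ⊤ :=
  fun _ hx => apply_mem_smProd_top LinearMap.id hx

theorem isFI_smProd_top (A : Submodule R M) : IsFI (SmProd A ⊤) := by
  intro g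
  rw [Submodule.map_le_iff_le_comap, smProd_le_iff]
  intro f x hx
  exact apply_mem_smProd_top (g ∘ₗ Submodule.subtype ⊤ ∘ₗ f) hx

theorem bot_smProd (B : Submodule R M) : SmProd ⊥ B = ⊥ := by
  rw [smProd_eq_bot_iff]
  intro f x hx
  rw [(Submodule.mem_bot R).1 hx, map_zero]

/-- Under associativity, a vanishing product still vanishes after both factors are replaced by
the fully invariant submodules they generate. -/
theorem smProd_closure_eq_bot
    (hassoc : ∀ A B C : Submodule R M, SmProd (SmProd A B) C = SmProd A (SmProd B C))
    {A B : Submodule R M} (h : SmProd A B = ⊥) :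
    SmProd (SmProd A ⊤) (SmProd B ⊤) = ⊥ := by
  have h1 : SmProd (SmProd A ⊤) B = ⊥ := by
    rw [hassoc, ← le_bot_iff, ← h]
    exact smProd_mono le_rfl (smProd_le_right ⊤ B)
  rw [← hassoc, h1, bot_smProd]

/-- If the product `·_M` on submodules is associative, the following are
equivalent: (a) `M` is Gelfand; (b) for distinct maximal submodules `N, L` there are submodules
`N', L'` with `N' ⊄ N`, `L' ⊄ L`, `L' ·_M N' = 0`; (c) for distinct maximal submodules `N, L`
there are `a ∉ L`, `b ∉ N` with `f(a) = 0` for every homomorphism `f : M → Rb`. -/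
theorem gelfand_tfae
    (hassoc : ∀ A B C : Submodule R M, SmProd (SmProd A B) C = SmProd A (SmProd B C)) :
    (Gelfand R M ↔
      ∀ N L : Submodule R M, IsCoatom N → IsCoatom L → N ≠ L →
        ∃ N' L' : Submodule R M, ¬ N' ≤ N ∧ ¬ L' ≤ L ∧ SmProd L' N' = ⊥) ∧
    (Gelfand R M ↔
      ∀ N L : Submodule R M, IsCoatom N → IsCoatom L → N ≠ L →
        ∃ a b : M, a ∉ L ∧ b ∉ N ∧
          ∀ f : M →ₗ[R] (Submodule.span R {b} : Submodule R M), f a = 0) := by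
  have hab : Gelfand R M ↔
      ∀ N L : Submodule R M, IsCoatom N → IsCoatom L → N ≠ L →
        ∃ N' L' : Submodule R M, ¬ N' ≤ N ∧ ¬ L' ≤ L ∧ SmProd L' N' = ⊥ := by
    constructor
    · intro h N L hN hL hNL
      obtain ⟨N', L', -, -, h1, h2, h3⟩ := h N L hN hL hNL
      exact ⟨N', L', h1, h2, h3⟩
    · intro h N L hN hL hNL
      obtain ⟨N', L', h1, h2, h3⟩ := h N L hN hL hNL
      exact ⟨SmProd N' ⊤, SmProd L' ⊤, isFI_smProd_top N', isFI_smProd_top L',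
        fun hle => h1 ((le_smProd_top N').trans hle),
        fun hle => h2 ((le_smProd_top L').trans hle), smProd_closure_eq_bot hassoc h3⟩
  refine ⟨hab, hab.trans ⟨?_, ?_⟩⟩
  · intro h N L hN hL hNL
    obtain ⟨N', L', h1, h2, h3⟩ := h N L hN hL hNL
    obtain ⟨b, hb, hbN⟩ := SetLike.not_le_iff_exists.1 h1
    obtain ⟨a, ha, haL⟩ := SetLike.not_le_iff_exists.1 h2
    have hRb : SmProd L' (Submodule.span R {b}) = ⊥ := by
      rw [← le_bot_iff, ← h3]
      exact smProd_mono le_rfl ((Submodule.span_singleton_le_iff_mem b N').2 hb)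
    exact ⟨a, b, haL, hbN, fun f => smProd_eq_bot_iff.1 hRb f a ha⟩
  · intro h N L hN hL hNL
    obtain ⟨a, b, haL, hbN, hf⟩ := h N L hN hL hNL
    refine ⟨Submodule.span R {b}, Submodule.span R {a},
      fun hle => hbN ((Submodule.span_singleton_le_iff_mem b N).1 hle),
      fun hle => haL ((Submodule.span_singleton_le_iff_mem a L).1 hle), ?_⟩
    rw [smProd_eq_bot_iff]
    intro f x hx
    obtain ⟨r, rfl⟩ := Submodule.mem_span_singleton.1 hx
    rw [map_smul, hf f, smul_zero]
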